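/- Let (X, M) be a measurable space, μ₁ a positive measure on (X, M), μ₂ a positive Borel measure on ℝ, and μ₃ a positive measure on (X, M) such that ψ·μ₁ ≤ μ₃ for some M-measurable density ψ : X → [0,∞). Let N : X → ℝ be M-measurable and let 1 < p ≤ q < ∞, with p' = p/(p−1) and q' = q/(q−1). If B' := sup_{r∈ℝ} μ₂([r,+∞))^{1/q} (∫_{{x : N(x)≤r}} ψ(x)^{−p'/p} dμ₁(x))^{1/p'} is finite, then for every M-measurable function f : X → [0,+∞], (∫_ℝ (∫_{{x : N(x)≤r}} f(x) dμ₁(x))^q dμ₂(r))^{1/q} ≤ min((p')^{1/p'} p^{1/q}, (q')^{1/p'} q^{1/q}) · B' · (∫_X f(x)^p dμ₃(x))^{1/p}. -/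

import Mathlib

open MeasureTheory ENNReal
open scoped NNReal

lemma hardy_lower (D : Set ℝ) (hD : IsLowerSet D) (hne : D.Nonempty) :
    ∃ u : ℕ → ℝ, Monotone u ∧ (∀ n, u n ∈ D) ∧ D = ⋃ n, Set.Iic (u n) := by
  by_cases hb : BddAbove D
  · have hl := isLUB_csSup hne hb
    by_cases hm : sSup D ∈ D
    · refine ⟨fun _ => sSup D, monotone_const, fun _ => hm, ?_⟩
      ext x
      simp only [Set.iUnion_const, Set.mem_Iic]
      exact ⟨fun h => hl.1 h, fun h => hD h hm⟩
    · obtain ⟨u, hu, -, hlim, hmem⟩ := hl.exists_seq_monotone_tendsto hne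
      refine ⟨u, hu, hmem, ?_⟩
      ext x
      simp only [Set.mem_iUnion, Set.mem_Iic]
      refine ⟨fun h => ?_, fun ⟨n, h⟩ => hD h (hmem n)⟩
      have hx : x < sSup D := lt_of_le_of_ne (hl.1 h) (fun e => hm (e ▸ h))
      obtain ⟨n, hn⟩ := (hlim.eventually (lt_mem_nhds hx)).exists
      exact ⟨n, hn.le⟩
  · have hall : ∀ x, x ∈ D := by
      intro x
      rw [not_bddAbove_iff] at hb
      obtain ⟨y, hy, hxy⟩ := hb x
      exact hD hxy.le hy
    refine ⟨fun n => n, Nat.mono_cast, fun n => hall _, ?_⟩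
    ext x
    simp only [Set.mem_iUnion, Set.mem_Iic]
    exact ⟨fun _ => exists_nat_ge x, fun _ => hall x⟩

lemma hardy_meas_le {X : Type*} [MeasurableSpace X] (ν : Measure X) (N : X → ℝ) (c : ℝ≥0∞) :
    ν {x | ν {y | N y ≤ N x} ≤ c} ≤ c := by
  set D : Set ℝ := {t | ν {y | N y ≤ t} ≤ c} with hDdef
  have hD : IsLowerSet D := fun a b hab ha =>
    le_trans (measure_mono (fun y (hy : N y ≤ b) => le_trans hy hab)) ha
  rcases D.eq_empty_or_nonempty with h0 | hne
  · have : {x | ν {y | N y ≤ N x} ≤ c} = ∅ := by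
      ext x
      simp only [Set.mem_ofPred_eq, Set.mem_empty_iff_false, iff_false]
      intro h
      have : N x ∈ D := h
      rw [h0] at this
      exact this
    rw [this]; simp
  · obtain ⟨u, hu, hmem, hU⟩ := hardy_lower D hD hne
    have : {x | ν {y | N y ≤ N x} ≤ c} = ⋃ n, {y | N y ≤ u n} := by
      ext x
      have : N x ∈ D ↔ N x ∈ ⋃ n, Set.Iic (u n) := by rw [← hU]
      simpa [hDdef] using this
    rw [this, Monotone.measure_iUnion]
    · exact iSup_le hmem
    · intro m n hmn y (hy : N y ≤ u m)
      exact le_trans hy (hu hmn)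

lemma hardy_pos {X : Type*} [MeasurableSpace X] (ν : Measure X) (N : X → ℝ) :
    ∀ᵐ x ∂ν, ν {y | N y ≤ N x} ≠ 0 := by
  have h := hardy_meas_le ν N 0
  simp only [nonpos_iff_eq_zero] at h
  rw [ae_iff]; simpa using h

lemma hardy_measurable {X : Type*} [MeasurableSpace X] (ν : Measure X) (N : X → ℝ)
    (hN : Measurable N) : Measurable (fun x => ν {y | N y ≤ N x}) := by
  have : Monotone (fun t : ℝ => ν {y | N y ≤ t}) := fun a b hab =>
    measure_mono (fun y (hy : N y ≤ a) => le_trans hy hab)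
  exact this.measurable.comp hN

lemma hardy_int {X : Type*} [MeasurableSpace X] (ν : Measure X) [IsFiniteMeasure ν] (N : X → ℝ)
    (hN : Measurable N) (s : ℝ) (hs0 : 0 < s) (hs1 : s < 1) :
    ∫⁻ x, (ν {y | N y ≤ N x}) ^ (-s) ∂ν ≤ ν Set.univ ^ (1 - s) * ENNReal.ofReal (1 / (1 - s)) := by
  set τ : X → ℝ := fun x => (ν {y | N y ≤ N x}).toReal with hτ
  have hτm : Measurable τ := (hardy_measurable ν N hN).ennreal_toReal
  set M := (ν Set.univ).toReal with hM
  have hM0 : 0 ≤ M := ENNReal.toReal_nonneg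
  have e1 : ∫⁻ x, (ν {y | N y ≤ N x}) ^ (-s) ∂ν = ∫⁻ x, ENNReal.ofReal (τ x ^ (-s)) ∂ν := by
    apply lintegral_congr_ae
    filter_upwards [hardy_pos ν N] with x hx
    have : 0 < τ x := ENNReal.toReal_pos hx (measure_ne_top _ _)
    rw [← ENNReal.ofReal_rpow_of_pos this, hτ, ENNReal.ofReal_toReal (measure_ne_top _ _)]
  have e2 : ∫⁻ v in Set.Ioc 0 M, ENNReal.ofReal (v ^ (-s)) = ENNReal.ofReal (M ^ (1 - s) / (1 - s)) := by
    have hi : IntervalIntegrable (fun v : ℝ => v ^ (-s)) volume 0 M :=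
      intervalIntegral.intervalIntegrable_rpow' (by linarith)
    rw [← ofReal_integral_eq_lintegral_ofReal]
    · rw [← intervalIntegral.integral_of_le hM0, integral_rpow (Or.inl (by linarith))]
      rw [show -s + 1 = 1 - s by ring, Real.zero_rpow (by linarith), sub_zero]
    · exact (intervalIntegrable_iff_integrableOn_Ioc_of_le hM0).1 hi
    · refine (ae_restrict_iff' measurableSet_Ioc).2 (Filter.Eventually.of_forall fun v hv => ?_)
      exact Real.rpow_nonneg hv.1.le _
  have e3 : ν Set.univ ^ (1 - s) * ENNReal.ofReal (1 / (1 - s)) = ENNReal.ofReal (M ^ (1 - s) / (1 - s)) := by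
    rw [div_eq_mul_one_div (M ^ (1 - s)), ENNReal.ofReal_mul (Real.rpow_nonneg hM0 _),
      ← ENNReal.ofReal_rpow_of_nonneg hM0 (by linarith), hM, ENNReal.ofReal_toReal (measure_ne_top _ _)]
  rw [e1, e3, ← e2]
  rw [lintegral_eq_lintegral_meas_lt ν (Filter.Eventually.of_forall fun x => Real.rpow_nonneg ENNReal.toReal_nonneg _)
    (hτm.pow_const _).aemeasurable]
  rw [lintegral_eq_lintegral_meas_lt (volume.restrict (Set.Ioc 0 M))
    ((ae_restrict_iff' measurableSet_Ioc).2 (Filter.Eventually.of_forall fun v hv => Real.rpow_nonneg hv.1.le _))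
    (by fun_prop)]
  apply setLIntegral_mono' measurableSet_Ioi
  intro l (hl : 0 < l)
  set c := l ^ (-(1 / s)) with hc
  have hc0 : 0 < c := Real.rpow_pos_of_pos hl _
  have hcl : c ^ (-s) = l := by
    rw [hc, ← Real.rpow_mul hl.le]
    have : -(1 / s) * -s = 1 := by field_simp
    rw [this, Real.rpow_one]
  have hA : ν {a | l < τ a ^ (-s)} ≤ ENNReal.ofReal (min c M) := by
    rw [ENNReal.ofReal_min]
    refine le_min ?_ ?_
    · refine le_trans (measure_mono ?_) (hardy_meas_le ν N (ENNReal.ofReal c))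
      intro x (hx : l < τ x ^ (-s))
      show ν {y | N y ≤ N x} ≤ ENNReal.ofReal c
      rw [← ENNReal.ofReal_toReal (measure_ne_top ν {y | N y ≤ N x})]
      apply ENNReal.ofReal_le_ofReal
      by_contra! h
      have := Real.rpow_le_rpow_of_nonpos hc0 h.le (show -s ≤ 0 by linarith)
      rw [hcl] at this
      exact absurd hx (not_lt.2 this)
    · rw [hM, ENNReal.ofReal_toReal (measure_ne_top _ _)]
      exact measure_mono (Set.subset_univ _)
  refine hA.trans ?_
  rw [Measure.restrict_apply (measurableSet_lt measurable_const (by fun_prop))]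
  have : ENNReal.ofReal (min c M) = volume (Set.Ioo 0 (min c M)) := by simp
  rw [this]
  apply measure_mono
  intro v hv
  refine ⟨?_, hv.1, (hv.2.trans_le (min_le_right _ _)).le⟩
  show l < v ^ (-s)
  rw [← hcl]
  exact Real.rpow_lt_rpow_of_neg hv.1 (hv.2.trans_le (min_le_left _ _)) (by linarith)

lemma hardy_int_set {X : Type*} [MeasurableSpace X] (ν : Measure X) [IsFiniteMeasure ν] (N : X → ℝ)
    (hN : Measurable N) (s : ℝ) (hs0 : 0 < s) (hs1 : s < 1) (r : ℝ) :
    ∫⁻ x in {x | N x ≤ r}, (ν {y | N y ≤ N x}) ^ (-s) ∂ν ≤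
      ν {x | N x ≤ r} ^ (1 - s) * ENNReal.ofReal (1 / (1 - s)) := by
  have h := hardy_int (ν.restrict {x | N x ≤ r}) N hN s hs0 hs1
  rw [Measure.restrict_apply_univ] at h
  refine le_trans (le_of_eq ?_) h
  apply setLIntegral_congr_fun (measurableSet_le hN measurable_const)
  intro x (hx : N x ≤ r)
  show _ = _
  simp only
  rw [Measure.restrict_apply (measurableSet_le hN measurable_const)]
  congr 2
  ext y
  exact ⟨fun h => ⟨h, le_trans h hx⟩, fun h => h.1⟩

lemma hardy_minkowski {X : Type*} [MeasurableSpace X] (ν : Measure X) [IsFiniteMeasure ν]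
    (m : Measure ℝ) [IsFiniteMeasure m] (N : X → ℝ) (hN : Measurable N) (g : X → ℝ≥0∞)
    (hg : Measurable g) (hgi : ∫⁻ x, g x ∂ν ≠ ⊤) (a : ℝ) (ha : 1 ≤ a) :
    (∫⁻ r, (∫⁻ x in {x | N x ≤ r}, g x ∂ν) ^ a ∂m) ≤
      (∫⁻ x, g x * m (Set.Ici (N x)) ^ (1 / a) ∂ν) ^ a := by
  have ha0 : 0 < a := by linarith
  set G : ℝ → ℝ≥0∞ := fun r => ∫⁻ x in {x | N x ≤ r}, g x ∂ν with hG
  have hGle : ∀ r, G r ≤ ∫⁻ x, g x ∂ν := fun r => setLIntegral_le_lintegral _ _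
  have hGmono : Monotone G := fun r t hrt =>
    lintegral_mono_set (fun y (hy : N y ≤ r) => le_trans hy hrt)
  have hGm : Measurable G := hGmono.measurable
  set I := ∫⁻ r, G r ^ a ∂m with hI
  have hIfin : I ≠ ⊤ := by
    have : I ≤ ∫⁻ r, (∫⁻ x, g x ∂ν) ^ a ∂m := lintegral_mono fun r => ENNReal.rpow_le_rpow (hGle r) ha0.le
    refine ne_top_of_le_ne_top ?_ this
    rw [lintegral_const]
    exact ENNReal.mul_ne_top (ENNReal.rpow_ne_top_of_nonneg ha0.le hgi) (measure_ne_top _ _)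
  set J := ∫⁻ x, g x * m (Set.Ici (N x)) ^ (1 / a) ∂ν with hJ
  have h1a : 1 / a ≤ 1 := by rw [div_le_one ha0]; exact ha
  have hS : MeasurableSet {z : ℝ × X | N z.2 ≤ z.1} :=
    measurableSet_le (hN.comp measurable_snd) measurable_fst
  have key : I ≤ I ^ (1 - 1 / a) * J := by
    calc I = ∫⁻ r, ∫⁻ x, {z : ℝ × X | N z.2 ≤ z.1}.indicator (fun z => G z.1 ^ (a - 1) * g z.2) (r, x) ∂ν ∂m := by
          apply lintegral_congr
          intro r
          have : G r ^ a = G r ^ (a - 1) * G r := by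
            conv_rhs => rw [← ENNReal.rpow_one (G r), ← ENNReal.rpow_mul, one_mul]
            rw [← ENNReal.rpow_add_of_nonneg _ _ (by linarith) (by norm_num)]; congr 1; ring
          rw [this]
          conv_lhs => rw [hG]
          simp only
          rw [← lintegral_const_mul _ hg, ← lintegral_indicator (measurableSet_le hN measurable_const)]
          rfl
      _ = ∫⁻ x, ∫⁻ r, {z : ℝ × X | N z.2 ≤ z.1}.indicator (fun z => G z.1 ^ (a - 1) * g z.2) (r, x) ∂m ∂ν := by
          apply lintegral_lintegral_swap
          apply Measurable.aemeasurable
          exact Measurable.indicator (by fun_prop) hS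
      _ = ∫⁻ x, g x * ∫⁻ r in Set.Ici (N x), G r ^ (a - 1) ∂m ∂ν := by
          apply lintegral_congr
          intro x
          rw [← lintegral_const_mul _ (by fun_prop), ← lintegral_indicator measurableSet_Ici]
          apply lintegral_congr
          intro r
          simp only [Set.indicator, Set.mem_ofPred_eq, Set.mem_Ici, mul_comm]
      _ ≤ ∫⁻ x, I ^ (1 - 1 / a) * (g x * m (Set.Ici (N x)) ^ (1 / a)) ∂ν := by
          apply lintegral_mono
          intro x
          have h := ENNReal.lintegral_mul_norm_pow_le (μ := m.restrict (Set.Ici (N x)))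
            (f := fun r => G r ^ a) (g := fun _ => 1) (by fun_prop) (by fun_prop)
            (p := 1 - 1 / a) (q := 1 / a) (by linarith) (by positivity) (by ring)
          have h2 : ∫⁻ r in Set.Ici (N x), G r ^ (a - 1) ∂m ≤ I ^ (1 - 1 / a) * m (Set.Ici (N x)) ^ (1 / a) := by
            refine le_trans (le_of_eq ?_) (h.trans ?_)
            · apply lintegral_congr
              intro r
              rw [ENNReal.one_rpow, mul_one, ← ENNReal.rpow_mul]
              congr 1; field_simp
            · rw [lintegral_one, Measure.restrict_apply_univ]
              gcongr
              exact setLIntegral_le_lintegral _ _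
          calc _ ≤ g x * (I ^ (1 - 1 / a) * m (Set.Ici (N x)) ^ (1 / a)) := mul_le_mul' le_rfl h2
            _ = _ := by ring
      _ = I ^ (1 - 1 / a) * J := by
          rw [lintegral_const_mul]
          have : Antitone (fun t : ℝ => m (Set.Ici t)) := fun s t hst => measure_mono (Set.Ici_subset_Ici.2 hst)
          have := this.measurable.comp hN
          exact hg.mul (this.pow_const _)
  by_cases hI0 : I = 0
  · rw [hI0]; exact zero_le
  have h3 : I ^ (1 / a) ≤ J := by
    have hne : I ^ (1 - 1 / a) ≠ 0 := by
      simp [ENNReal.rpow_eq_zero_iff, hI0, hIfin]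
    have hnt : I ^ (1 - 1 / a) ≠ ⊤ := ENNReal.rpow_ne_top_of_nonneg (by linarith) hIfin
    rw [← ENNReal.mul_le_mul_iff_right hne hnt, ← ENNReal.rpow_add _ _ hI0 hIfin]
    simpa using key
  calc I = (I ^ (1 / a)) ^ a := by rw [← ENNReal.rpow_mul]; simp [ha0.ne']
    _ ≤ J ^ a := ENNReal.rpow_le_rpow h3 ha0.le

lemma hardy_core {X : Type*} [MeasurableSpace X] (ν : Measure X) [IsFiniteMeasure ν]
    (μ : Measure ℝ) [IsFiniteMeasure μ] (N : X → ℝ) (hN : Measurable N) (g : X → ℝ≥0∞)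
    (hg : Measurable g) (p q s : ℝ) (hp : 1 < p) (hpq : p ≤ q) (hs0 : 0 < s) (hs1 : s < 1)
    (hgi : ∫⁻ x, g x ^ p ∂ν ≠ ⊤) (B : ℝ≥0∞)
    (hB : ∀ r, μ (Set.Ici r) ^ (1 / q) * ν {x | N x ≤ r} ^ (1 - 1 / p) ≤ B) :
    (∫⁻ r, (∫⁻ x in {x | N x ≤ r}, g x ∂ν) ^ q ∂μ) ≤
      ENNReal.ofReal (1 / (1 - s)) ^ (q * (1 - 1 / p)) * ENNReal.ofReal (1 / s) * B ^ q *
        (∫⁻ x, g x ^ p ∂ν) ^ (q / p) := by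
  have hp0 : 0 < p := by linarith
  have hq0 : 0 < q := by linarith
  have hk : 0 < 1 - 1 / p := by
    rw [sub_pos, div_lt_one hp0]; exact hp
  set κ := 1 - 1 / p with hκ
  have hpk : p * κ = p - 1 := by rw [hκ]; field_simp
  set V : ℝ → ℝ≥0∞ := fun r => ν {x | N x ≤ r} with hV
  set U : ℝ → ℝ≥0∞ := fun r => μ (Set.Ici r) with hU
  have hVfin : ∀ r, V r ≠ ⊤ := fun r => measure_ne_top _ _
  have hUfin : ∀ r, U r ≠ ⊤ := fun r => measure_ne_top _ _
  have hVmono : Monotone V := fun a b hab =>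
    measure_mono (fun y (hy : N y ≤ a) => le_trans hy hab)
  have hUanti : Antitone U := fun a b hab => measure_mono (Set.Ici_subset_Ici.2 hab)
  have hVm := hVmono.measurable
  have hUm := hUanti.measurable
  have hVpos : ∀ᵐ x ∂ν, V (N x) ≠ 0 := hardy_pos ν N
  have hneg : ∀ r : ℝ, {y : ℝ | -y ≤ -r} = Set.Ici r := by
    intro r; ext y; simp
  have hUpos : ∀ᵐ r ∂μ, U r ≠ 0 := by
    have := hardy_pos μ (fun r => -r)
    simpa only [hneg] using this
  -- weight
  set gt : X → ℝ≥0∞ := fun x => g x ^ p * V (N x) ^ (s * (p - 1)) with hgt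
  have hgtm : Measurable gt := (hg.pow_const _).mul ((hVm.comp hN).pow_const _)
  set Gt : ℝ → ℝ≥0∞ := fun r => ∫⁻ x in {x | N x ≤ r}, gt x ∂ν with hGt
  have hGtmono : Monotone Gt := fun r t hrt =>
    lintegral_mono_set (fun y (hy : N y ≤ r) => le_trans hy hrt)
  have hGtm := hGtmono.measurable
  have hgtfin : ∫⁻ x, gt x ∂ν ≠ ⊤ := by
    have : ∫⁻ x, gt x ∂ν ≤ ∫⁻ x, g x ^ p * ν Set.univ ^ (s * (p - 1)) ∂ν := by
      apply lintegral_mono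
      intro x
      refine mul_le_mul' le_rfl (ENNReal.rpow_le_rpow (measure_mono (Set.subset_univ _)) ?_)
      exact mul_nonneg hs0.le (by linarith)
    refine ne_top_of_le_ne_top ?_ this
    rw [lintegral_mul_const _ (hg.pow_const _)]
    refine ENNReal.mul_ne_top hgi (ENNReal.rpow_ne_top_of_nonneg (mul_nonneg hs0.le (by linarith)) (measure_ne_top _ _))
  set c1 := ENNReal.ofReal (1 / (1 - s)) with hc1
  set c2 := ENNReal.ofReal (1 / s) with hc2
  -- Hölder
  have hH : ∀ r, ∫⁻ x in {x | N x ≤ r}, g x ∂ν ≤ Gt r ^ (1 / p) * (V r ^ (1 - s) * c1) ^ κ := by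
    intro r
    have h := ENNReal.lintegral_mul_norm_pow_le (μ := ν.restrict {x | N x ≤ r})
            (f := gt) (g := fun x => V (N x) ^ (-s)) hgtm.aemeasurable
            ((hVm.comp hN).pow_const _).aemeasurable
            (p := 1 / p) (q := κ) (by positivity) hk.le (by rw [hκ]; ring)
    refine le_trans (le_of_eq ?_) (h.trans ?_)
    · apply lintegral_congr_ae
      filter_upwards [ae_restrict_of_ae hVpos] with x hx
      rw [hgt]
      simp only
      rw [ENNReal.mul_rpow_of_nonneg _ _ (by positivity : 0 ≤ 1 / p), ← ENNReal.rpow_mul, ← ENNReal.rpow_mul,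
        ← ENNReal.rpow_mul, mul_assoc, ← ENNReal.rpow_add _ _ hx (hVfin _)]
      have e : s * (p - 1) * (1 / p) + -s * κ = 0 := by rw [← hpk]; field_simp; ring
      rw [e, mul_one_div_cancel hp0.ne']; simp
    · refine mul_le_mul' le_rfl (ENNReal.rpow_le_rpow ?_ hk.le)
      exact hardy_int_set ν N hN s hs0 hs1 r
  -- the measure m
  set W : ℝ → ℝ≥0∞ := fun r => U r ^ (-(1 - s)) with hW
  have hWm : Measurable W := hUm.pow_const _
  have hWint : ∫⁻ r, W r ∂μ ≤ μ Set.univ ^ s * c2 := by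
    have := hardy_int μ (fun r => -r) measurable_neg (1 - s) (by linarith) (by linarith)
    simp only [hneg, _root_.sub_sub_cancel] at this
    exact this
  have hWset : ∀ t, ∫⁻ r in Set.Ici t, W r ∂μ ≤ U t ^ s * c2 := by
    intro t
    have := hardy_int_set μ (fun r => -r) measurable_neg (1 - s) (by linarith) (by linarith) (-t)
    simp only [hneg, _root_.sub_sub_cancel] at this
    exact this
  have hmfin : IsFiniteMeasure (μ.withDensity W) := by
    refine isFiniteMeasure_withDensity (ne_top_of_le_ne_top ?_ hWint)
    exact ENNReal.mul_ne_top (ENNReal.rpow_ne_top_of_nonneg hs0.le (measure_ne_top _ _)) ENNReal.ofReal_ne_top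
  have hMk := hardy_minkowski ν (μ.withDensity W) N hN gt hgtm hgtfin (q / p) ((one_le_div hp0).2 hpq)
  rw [lintegral_withDensity_eq_lintegral_mul _ hWm (hGtm.pow_const _)] at hMk
  -- estimate of the right side
  have hR : ∫⁻ x, gt x * (μ.withDensity W) (Set.Ici (N x)) ^ (1 / (q / p)) ∂ν ≤
      (∫⁻ x, g x ^ p ∂ν) * (B ^ (s * p) * c2 ^ (p / q)) := by
    rw [← lintegral_mul_const _ (hg.pow_const _)]
    apply lintegral_mono
    intro x
    simp only
    rw [withDensity_apply _ measurableSet_Ici, one_div_div]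
    have hpq0 : 0 ≤ p / q := by positivity
    have hps : 0 ≤ s * p := by positivity
    calc gt x * (∫⁻ r in Set.Ici (N x), W r ∂μ) ^ (p / q)
        ≤ gt x * (U (N x) ^ s * c2) ^ (p / q) := 
          mul_le_mul' le_rfl (ENNReal.rpow_le_rpow (hWset _) hpq0)
      _ = g x ^ p * ((U (N x) ^ (1 / q) * V (N x) ^ κ) ^ (s * p) * c2 ^ (p / q)) := by
          rw [hgt]
          simp only
          rw [ENNReal.mul_rpow_of_nonneg _ _ hpq0, ENNReal.mul_rpow_of_nonneg _ _ hps,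
            ← ENNReal.rpow_mul, ← ENNReal.rpow_mul, ← ENNReal.rpow_mul,
            show κ * (s * p) = s * (p - 1) by rw [← hpk]; ring,
            show 1 / q * (s * p) = s * (p / q) by ring]
          ring
      _ ≤ _ := by
          refine mul_le_mul' le_rfl (mul_le_mul' (ENNReal.rpow_le_rpow (hB _) hps) le_rfl)
  have hqp : 0 ≤ q / p := by positivity
  have hMk2 := hMk.trans (ENNReal.rpow_le_rpow hR hqp)
  have hs1' : 0 ≤ (1 - s) * q := mul_nonneg (by linarith) hq0.le
  have hpt : ∀ᵐ r ∂μ, (∫⁻ x in {x | N x ≤ r}, g x ∂ν) ^ q ≤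
      (c1 ^ (q * κ) * B ^ ((1 - s) * q)) * (W * fun r => Gt r ^ (q / p)) r := by
    filter_upwards [hUpos] with r hr
    calc (∫⁻ x in {x | N x ≤ r}, g x ∂ν) ^ q ≤ (Gt r ^ (1 / p) * (V r ^ (1 - s) * c1) ^ κ) ^ q :=
          ENNReal.rpow_le_rpow (hH r) hq0.le
      _ = c1 ^ (q * κ) * (V r ^ κ) ^ ((1 - s) * q) * Gt r ^ (q / p) := by
          rw [ENNReal.mul_rpow_of_nonneg _ _ hq0.le, ENNReal.mul_rpow_of_nonneg _ _ hk.le,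
            ENNReal.mul_rpow_of_nonneg _ _ hq0.le]
          simp only [← ENNReal.rpow_mul]
          rw [show 1 / p * q = q / p by ring, show (1 - s) * κ * q = κ * ((1 - s) * q) by ring, mul_comm κ q]
          ring
      _ = c1 ^ (q * κ) * ((U r ^ (1 / q) * V r ^ κ) ^ ((1 - s) * q) * W r) * Gt r ^ (q / p) := by
          congr 2
          rw [ENNReal.mul_rpow_of_nonneg _ _ hs1', hW]
          simp only
          rw [← ENNReal.rpow_mul (U r), mul_right_comm, ← ENNReal.rpow_add _ _ hr (hUfin r)]
          have : 1 / q * ((1 - s) * q) + -(1 - s) = 0 := by field_simp; ring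
          rw [this]; simp
      _ ≤ c1 ^ (q * κ) * (B ^ ((1 - s) * q) * W r) * Gt r ^ (q / p) := by
          refine mul_le_mul' (mul_le_mul' le_rfl (mul_le_mul' (ENNReal.rpow_le_rpow (hB r) hs1') le_rfl)) le_rfl
      _ = _ := by simp only [Pi.mul_apply]; ring
  refine (lintegral_mono_ae hpt).trans ?_
  rw [lintegral_const_mul _ (hWm.mul (hGtm.pow_const _))]
  refine (mul_le_mul' le_rfl hMk2).trans (le_of_eq ?_)
  rw [ENNReal.mul_rpow_of_nonneg _ _ hqp, ENNReal.mul_rpow_of_nonneg _ _ hqp, ← ENNReal.rpow_mul, ← ENNReal.rpow_mul,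
    show p / q * (q / p) = 1 by field_simp, ENNReal.rpow_one,
    show s * p * (q / p) = s * q by field_simp]
  have : B ^ q = B ^ ((1 - s) * q) * B ^ (s * q) := by
    rw [← ENNReal.rpow_add_of_nonneg _ _ hs1' (by positivity)]; congr 1; ring
  rw [this]; ring

lemma hardy_gen {X : Type*} [MeasurableSpace X] (ν : Measure X)
    (μ : Measure ℝ) (N : X → ℝ) (hN : Measurable N) (g : X → ℝ≥0∞)
    (hg : Measurable g) (p q s : ℝ) (hp : 1 < p) (hpq : p ≤ q) (hs0 : 0 < s) (hs1 : s < 1)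
    (B : ℝ≥0∞) (hBfin : B ≠ ⊤)
    (hB : ∀ r, μ (Set.Ici r) ^ (1 / q) * ν {x | N x ≤ r} ^ (1 - 1 / p) ≤ B) :
    (∫⁻ r, (∫⁻ x in {x | N x ≤ r}, g x ∂ν) ^ q ∂μ) ≤
      ENNReal.ofReal (1 / (1 - s)) ^ (q * (1 - 1 / p)) * ENNReal.ofReal (1 / s) * B ^ q *
        (∫⁻ x, g x ^ p ∂ν) ^ (q / p) := by
  have hp0 : 0 < p := by linarith
  have hq0 : 0 < q := by linarith
  have hk : 0 < 1 - 1 / p := by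
    rw [sub_pos, div_lt_one hp0]; exact hp
  have hq1 : 0 < 1 / q := by positivity
  set V : ℝ → ℝ≥0∞ := fun r => ν {x | N x ≤ r} with hV
  set U : ℝ → ℝ≥0∞ := fun r => μ (Set.Ici r) with hU
  have hVmono : Monotone V := fun a b hab =>
    measure_mono (fun y (hy : N y ≤ a) => le_trans hy hab)
  have hUanti : Antitone U := fun a b hab => measure_mono (Set.Ici_subset_Ici.2 hab)
  have hneg : ∀ r : ℝ, {y : ℝ | -y ≤ -r} = Set.Ici r := by
    intro r; ext y; simp
  have hUpos : ∀ᵐ r ∂μ, U r ≠ 0 := by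
    have := hardy_pos μ (fun r => -r)
    simpa only [hneg] using this
  have hVfin : ∀ r, U r ≠ 0 → V r ≠ ⊤ := by
    intro r hr hv
    have h := hB r
    have h1 : ν {x | N x ≤ r} = ⊤ := hv
    rw [h1, ENNReal.top_rpow_of_pos hk, ENNReal.mul_top] at h
    · exact hBfin (top_le_iff.1 h)
    · simpa [ENNReal.rpow_eq_zero_iff, hq1, hq0, hq1.not_gt, hq0.not_gt] using hr
  have hUfin : ∀ r, V r ≠ 0 → U r ≠ ⊤ := by
    intro r hr hv
    have h := hB r
    have h1 : μ (Set.Ici r) = ⊤ := hv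
    rw [h1, ENNReal.top_rpow_of_pos hq1, ENNReal.top_mul] at h
    · exact hBfin (top_le_iff.1 h)
    · intro h0
      rw [ENNReal.rpow_eq_zero_iff] at h0
      rcases h0 with h0 | h0
      · exact hr h0.1
      · linarith [h0.2]
  set G : ℝ → ℝ≥0∞ := fun r => ∫⁻ x in {x | N x ≤ r}, g x ∂ν with hG
  have hGmono : Monotone G := fun r t hrt =>
    lintegral_mono_set (fun y (hy : N y ≤ r) => le_trans hy hrt)
  have hG0 : ∀ r, V r = 0 → G r = 0 := by
    intro r hr
    exact setLIntegral_measure_zero _ _ hr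
  set A1 : Set ℝ := {r | U r ≠ 0} with hA1
  set A2 : Set ℝ := {r | V (-r) ≠ 0} with hA2
  have hA1l : IsLowerSet A1 := fun a b hab ha h0 => ha (le_antisymm ((hUanti hab).trans h0.le) zero_le)
  have hA2l : IsLowerSet A2 := fun a b hab ha h0 => 
    ha (le_antisymm ((hVmono (neg_le_neg hab)).trans h0.le) zero_le)
  by_cases hne : A1.Nonempty ∧ A2.Nonempty
  swap
  · have : ∀ᵐ r ∂μ, G r ^ q = 0 := by
      filter_upwards [hUpos] with r hr
      have : V r = 0 := by
        by_contra h
        exact hne ⟨⟨r, hr⟩, ⟨-r, by simpa [hA2] using h⟩⟩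
      rw [hG0 r this, ENNReal.zero_rpow_of_pos hq0]
    rw [lintegral_congr_ae this]; simp
  obtain ⟨b, hbm, hbA, hbU⟩ := hardy_lower A1 hA1l hne.1
  obtain ⟨a, ham, haA, haU⟩ := hardy_lower A2 hA2l hne.2
  have hstep : ∀ n, ∫⁻ r in Set.Icc (-a n) (b n), G r ^ q ∂μ ≤ 
      ENNReal.ofReal (1 / (1 - s)) ^ (q * (1 - 1 / p)) * ENNReal.ofReal (1 / s) * B ^ q *
        (∫⁻ x, g x ^ p ∂ν) ^ (q / p) := by
    intro n
    by_cases hab : -a n ≤ b n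
    swap
    · rw [Set.Icc_eq_empty hab]; simp
    have hVb : V (b n) ≠ ⊤ := hVfin _ (hbA n)
    have hUa : U (-a n) ≠ ⊤ := hUfin _ (haA n)
    by_cases hgi : ∫⁻ x, g x ^ p ∂ν = ⊤
    · have hVb0 : V (b n) ≠ 0 := fun h0 => haA n (le_antisymm ((hVmono hab).trans h0.le) zero_le)
      have hUb : U (b n) ≠ ⊤ := hUfin _ hVb0
      have hB0 : B ≠ 0 := by
        intro h0
        have h := hB (b n)
        rw [h0, nonpos_iff_eq_zero, mul_eq_zero] at h
        rcases h with h | h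
        · exact (ENNReal.rpow_pos (pos_iff_ne_zero.2 (hbA n)) hUb).ne' h
        · exact (ENNReal.rpow_pos (pos_iff_ne_zero.2 hVb0) hVb).ne' h
      rw [hgi, ENNReal.top_rpow_of_pos (by positivity), ENNReal.mul_top]
      · exact le_top
      · have h1 : ENNReal.ofReal (1 / (1 - s)) ≠ 0 := by
          simp [hs1]
        have h2 : ENNReal.ofReal (1 / s) ≠ 0 := by
          simp [hs0]
        refine mul_ne_zero (mul_ne_zero ?_ h2) ?_
        · exact (ENNReal.rpow_pos (pos_iff_ne_zero.2 h1) ENNReal.ofReal_ne_top).ne'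
        · exact (ENNReal.rpow_pos (pos_iff_ne_zero.2 hB0) hBfin).ne'
    · have i1 : IsFiniteMeasure (ν.restrict {x | N x ≤ b n}) := ⟨by
        rw [Measure.restrict_apply_univ]; exact lt_top_iff_ne_top.2 hVb⟩
      have i2 : IsFiniteMeasure (μ.restrict (Set.Icc (-a n) (b n))) := ⟨by
        rw [Measure.restrict_apply_univ]
        exact lt_of_le_of_lt (measure_mono Set.Icc_subset_Ici_self) (lt_top_iff_ne_top.2 hUa)⟩
      have hle : ∫⁻ x in {x | N x ≤ b n}, g x ^ p ∂ν ≤ ∫⁻ x, g x ^ p ∂ν := setLIntegral_le_lintegral _ _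
      have h := hardy_core (ν.restrict {x | N x ≤ b n}) (μ.restrict (Set.Icc (-a n) (b n))) N hN g hg
        p q s hp hpq hs0 hs1 (ne_top_of_le_ne_top hgi hle) B (by
          intro r
          refine le_trans ?_ (hB r)
          exact mul_le_mul' (ENNReal.rpow_le_rpow (Measure.restrict_apply_le _ _) hq1.le)
            (ENNReal.rpow_le_rpow (Measure.restrict_apply_le _ _) hk.le))
      refine le_trans (le_of_eq ?_) (h.trans (mul_le_mul' le_rfl (ENNReal.rpow_le_rpow hle (by positivity))))
      apply setLIntegral_congr_fun measurableSet_Icc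
      intro r hr
      simp only [hG]
      rw [Measure.restrict_restrict (measurableSet_le hN measurable_const)]
      congr 3
      ext y
      exact ⟨fun h => ⟨h, le_trans h hr.2⟩, fun h => h.1⟩
  have hUn : ∫⁻ r, G r ^ q ∂μ = ∫⁻ r in ⋃ n, Set.Icc (-a n) (b n), G r ^ q ∂μ := by
    rw [← lintegral_indicator (MeasurableSet.iUnion fun n => measurableSet_Icc)]
    apply lintegral_congr_ae
    filter_upwards [hUpos] with r hr
    by_cases hv : V r = 0
    · simp [Set.indicator, hG0 r hv, ENNReal.zero_rpow_of_pos hq0]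
    · rw [Set.indicator_of_mem]
      have h1 : r ∈ A1 := hr
      have h2 : -r ∈ A2 := by simpa [hA2] using hv
      rw [hbU] at h1
      rw [haU] at h2
      simp only [Set.mem_iUnion, Set.mem_Iic] at h1 h2
      obtain ⟨i, hi⟩ := h1
      obtain ⟨j, hj⟩ := h2
      simp only [Set.mem_iUnion, Set.mem_Icc]
      refine ⟨max i j, ?_, hi.trans (hbm (le_max_left _ _))⟩
      linarith [ham (le_max_right i j)]
  rw [hUn, setLIntegral_iUnion_of_directed]
  · exact iSup_le hstep
  · apply Monotone.directed_le
    intro i j hij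
    exact Set.Icc_subset_Icc (neg_le_neg (ham hij)) (hbm hij)

lemma hardy_root {X : Type*} [MeasurableSpace X] (ν : Measure X)
    (μ : Measure ℝ) (N : X → ℝ) (hN : Measurable N) (g : X → ℝ≥0∞)
    (hg : Measurable g) (p q s : ℝ) (hp : 1 < p) (hpq : p ≤ q) (hs0 : 0 < s) (hs1 : s < 1)
    (B : ℝ≥0∞) (hBfin : B ≠ ⊤)
    (hB : ∀ r, μ (Set.Ici r) ^ (1 / q) * ν {x | N x ≤ r} ^ (1 - 1 / p) ≤ B) :
    (∫⁻ r, (∫⁻ x in {x | N x ≤ r}, g x ∂ν) ^ q ∂μ) ^ (1 / q) ≤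
      ENNReal.ofReal ((1 / (1 - s)) ^ (1 - 1 / p) * (1 / s) ^ (1 / q)) * B *
        (∫⁻ x, g x ^ p ∂ν) ^ (1 / p) := by
  have hp0 : 0 < p := by linarith
  have hq0 : 0 < q := by linarith
  have hq1 : 0 ≤ 1 / q := by positivity
  have hs2 : 0 < 1 - s := by linarith
  have h := ENNReal.rpow_le_rpow (hardy_gen ν μ N hN g hg p q s hp hpq hs0 hs1 B hBfin hB) hq1
  refine h.trans (le_of_eq ?_)
  rw [ENNReal.mul_rpow_of_nonneg _ _ hq1, ENNReal.mul_rpow_of_nonneg _ _ hq1,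
    ENNReal.mul_rpow_of_nonneg _ _ hq1, ← ENNReal.rpow_mul, ← ENNReal.rpow_mul, ← ENNReal.rpow_mul,
    ENNReal.ofReal_mul (by positivity), ENNReal.ofReal_rpow_of_pos (by positivity),
    ENNReal.ofReal_rpow_of_pos (by positivity)]
  rw [show q * (1 - 1 / p) * (1 / q) = 1 - 1 / p by field_simp,
    show q / p * (1 / q) = 1 / p by field_simp, mul_one_div_cancel hq0.ne', ENNReal.rpow_one]

/-- General Hardy inequality (Theorem 2, sufficiency, with non-strict sublevel sets). -/
theorem general_hardy_inequality_le
    {X : Type*} [MeasurableSpace X]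
    (μ₁ μ₃ : Measure X) (μ₂ : Measure ℝ)
    (ψ : X → ℝ≥0) (hψ : Measurable ψ)
    (hψμ : μ₁.withDensity (fun x => (ψ x : ℝ≥0∞)) ≤ μ₃)
    (N : X → ℝ) (hN : Measurable N)
    (p q p' q' : ℝ) (hp : 1 < p) (hpq : p ≤ q)
    (hp' : p' = p / (p - 1)) (hq' : q' = q / (q - 1))
    (B' : ℝ≥0∞)
    (hB' : B' = ⨆ r : ℝ, μ₂ (Set.Ici r) ^ (1 / q) *
      (∫⁻ x in {x | N x ≤ r}, ((ψ x : ℝ≥0∞)) ^ (-(p' / p)) ∂μ₁) ^ (1 / p'))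
    (hB'fin : B' ≠ ⊤) :
    ∀ f : X → ℝ≥0∞, Measurable f →
      (∫⁻ r, (∫⁻ x in {x | N x ≤ r}, f x ∂μ₁) ^ q ∂μ₂) ^ (1 / q) ≤
        ENNReal.ofReal (min (p' ^ (1 / p') * p ^ (1 / q)) (q' ^ (1 / p') * q ^ (1 / q))) *
          B' * (∫⁻ x, f x ^ p ∂μ₃) ^ (1 / p) := by
  intro f hf
  have hp0 : 0 < p := by linarith
  have hp1 : 0 < p - 1 := by linarith
  have hq0 : 0 < q := by linarith
  have hq1 : 0 < q - 1 := by linarith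
  have hp'0 : 0 < p' := by rw [hp']; positivity
  have hk : 1 / p' = 1 - 1 / p := by rw [hp']; field_simp
  have hkpos : 0 < 1 - 1 / p := by rw [← hk]; positivity
  have he : 0 < p' / p := by positivity
  set w : X → ℝ≥0∞ := fun x => (ψ x : ℝ≥0∞) ^ (-(p' / p)) with hw
  have hψm : Measurable (fun x => (ψ x : ℝ≥0∞)) := hψ.coe_nnreal_ennreal
  have hwm : Measurable w := hψm.pow_const _
  have hNs : ∀ r, MeasurableSet {x | N x ≤ r} := fun r => measurableSet_le hN measurable_const
  set ν := μ₁.withDensity w with hν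
  set g : X → ℝ≥0∞ := fun x => f x * (ψ x : ℝ≥0∞) ^ (p' / p) with hg
  have hgm : Measurable g := hf.mul (hψm.pow_const _)
  have hνr : ∀ r, ν {x | N x ≤ r} = ∫⁻ x in {x | N x ≤ r}, w x ∂μ₁ := fun r =>
    withDensity_apply _ (hNs r)
  have hB : ∀ r, μ₂ (Set.Ici r) ^ (1 / q) * ν {x | N x ≤ r} ^ (1 - 1 / p) ≤ B' := by
    intro r
    rw [hνr, hB', ← hk]
    exact le_iSup (fun r : ℝ => μ₂ (Set.Ici r) ^ (1 / q) *
      (∫⁻ x in {x | N x ≤ r}, w x ∂μ₁) ^ (1 / p')) r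
  have hcancel : ∀ x, (ψ x : ℝ≥0∞) ≠ 0 → w x * g x = f x := by
    intro x hx
    simp only [hw, hg]
    rw [mul_left_comm, ← ENNReal.rpow_add _ _ hx ENNReal.coe_ne_top]
    simp
  have hUpos : ∀ᵐ r ∂μ₂, μ₂ (Set.Ici r) ≠ 0 := by
    have := hardy_pos μ₂ (fun r => -r)
    have hneg : ∀ r : ℝ, {y : ℝ | -y ≤ -r} = Set.Ici r := by
      intro r; ext y; simp
    simpa only [hneg] using this
  have hL : ∫⁻ r, (∫⁻ x in {x | N x ≤ r}, f x ∂μ₁) ^ q ∂μ₂ =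
      ∫⁻ r, (∫⁻ x in {x | N x ≤ r}, g x ∂ν) ^ q ∂μ₂ := by
    apply lintegral_congr_ae
    filter_upwards [hUpos] with r hr
    have hfin : ∫⁻ x in {x | N x ≤ r}, w x ∂μ₁ ≠ ⊤ := by
      intro hv
      have h := hB r
      rw [hνr, hv, ENNReal.top_rpow_of_pos hkpos, ENNReal.mul_top] at h
      · exact hB'fin (top_le_iff.1 h)
      · intro h0
        rw [ENNReal.rpow_eq_zero_iff] at h0
        have : 0 < 1 / q := by positivity
        rcases h0 with h0 | h0
        · exact hr h0.1
        · linarith [h0.2]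
    congr 1
    rw [hν, restrict_withDensity (hNs r), lintegral_withDensity_eq_lintegral_mul _ hwm hgm]
    apply lintegral_congr_ae
    filter_upwards [ae_lt_top hwm hfin] with x hx
    simp only [Pi.mul_apply]
    rw [hcancel x]
    intro h0
    simp only [hw, h0] at hx
    rw [ENNReal.zero_rpow_of_neg (by linarith)] at hx
    exact lt_irrefl _ hx
  have hR : ∫⁻ x, g x ^ p ∂ν ≤ ∫⁻ x, f x ^ p ∂μ₃ := by
    refine le_trans ?_ (lintegral_mono' hψμ le_rfl)
    rw [hν, lintegral_withDensity_eq_lintegral_mul _ hwm (hgm.pow_const _),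
      lintegral_withDensity_eq_lintegral_mul _ hψm (hf.pow_const _)]
    apply lintegral_mono
    intro x
    simp only [Pi.mul_apply]
    by_cases h0 : (ψ x : ℝ≥0∞) = 0
    · have : g x = 0 := by simp only [hg, h0, ENNReal.zero_rpow_of_pos he, mul_zero]
      rw [this, ENNReal.zero_rpow_of_pos hp0, mul_zero]
      exact zero_le
    · apply le_of_eq
      simp only [hg, hw]
      rw [ENNReal.mul_rpow_of_nonneg _ _ hp0.le, mul_left_comm, ← ENNReal.rpow_mul,
        ← ENNReal.rpow_add _ _ h0 ENNReal.coe_ne_top]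
      have : -(p' / p) + p' / p * p = 1 := by rw [hp']; field_simp; ring
      rw [this, ENNReal.rpow_one, mul_comm]
  have main : ∀ s : ℝ, 0 < s → s < 1 → 
      (∫⁻ r, (∫⁻ x in {x | N x ≤ r}, f x ∂μ₁) ^ q ∂μ₂) ^ (1 / q) ≤
      ENNReal.ofReal ((1 / (1 - s)) ^ (1 / p') * (1 / s) ^ (1 / q)) * B' *
        (∫⁻ x, f x ^ p ∂μ₃) ^ (1 / p) := by
    intro s hs0 hs1
    rw [hL, hk]
    refine (hardy_root ν μ₂ N hN g hgm p q s hp hpq hs0 hs1 B' hB'fin hB).trans ?_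
    exact mul_le_mul' le_rfl (ENNReal.rpow_le_rpow hR (by positivity))
  have e1 : 1 / (1 - 1 / p) = p' := by rw [← hk]; simp
  have e2 : 1 / (1 - 1 / q) = q' := by rw [hq']; field_simp
  have m1 := main (1 / p) (by positivity) (by rw [div_lt_one hp0]; exact hp)
  have m2 := main (1 / q) (by positivity) (by rw [div_lt_one hq0]; linarith)
  rw [e1, one_div_one_div] at m1
  rw [e2, one_div_one_div] at m2
  rcases min_choice (p' ^ (1 / p') * p ^ (1 / q)) (q' ^ (1 / p') * q ^ (1 / q)) with h | h
  · rw [h]; exact m1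
  · rw [h]; exact m2
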